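/- arXiv:1810.03267 — 2 statements merged into one kernel-verified Lean document; each statement's English description precedes it below -/
import Mathlib

section
/- Let α ∈ (0,1), e_b ∈ [0,1], e_p ∈ [0,1] with |1/2 − e_p| ≤ √(α(1−α)), and set m₀₀ = α(1−e_b), m₃₃ = (1−α)(1−e_b), m₁₁ = α e_b, m₂₂ = (1−α)e_b (so m₀₀/m₃₃ = m₁₁/m₂₂ = α/(1−α)). Then the minimum of C(ρ(a,b)) over real numbers a, b with a + b = 1/2 − e_p, |a| ≤ √(m₀₀m₃₃), |b| ≤ √(m₁₁m₂₂) equals H(α) − H(1/2 + √((α−1/2)² + (1/2−e_p)²)), and it is attained at ā = (1−e_b)(1/2 − e_p) and b̄ = e_b(1/2 − e_p). -/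
/-!
Write `p = 1 - eb`, `q = eb`, `c = 1/2 - ep`, `r x = √((α - 1/2)² + x²)`. Up to reordering the
basis, `ρ(p x, q y)` is a direct sum of two `2 × 2` blocks, with eigenvalues `p (1/2 ± r x)` and
`q (1/2 ± r y)`. Hence (`vnEntropy_rhoGen_scaled`)
`S(ρ) = H(eb) + p H(1/2 + r x) + q H(1/2 + r y)`, and the diagonal part has entropy
`H(eb) + H(α)`, so `C(ρ) = H(α) - p H(1/2 + r x) - q H(1/2 + r y)`.

For the lower bound, `p x + q y = c`. Concavity of `H` bounds `p H(1/2 + r x) + q H(1/2 + r y)` by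
`H(1/2 + (p r x + q r y))`. The function `r` is convex, so `p r x + q r y ≥ r c`, and `H` is
decreasing on `[1/2, 1]`; the bound is therefore at most `H(1/2 + r c)`. Equality holds at
`x = y = c`.
-/

open Matrix Complex Kronecker
open scoped ComplexOrder

noncomputable section

/-- von Neumann entropy (base 2), via eigenvalues; junk value 0 if not Hermitian. -/
noncomputable def vnEntropy {n : Type*} [Fintype n] [DecidableEq n] (ρ : Matrix n n ℂ) : ℝ :=
  if h : ρ.IsHermitian then -∑ i, h.eigenvalues i * Real.logb 2 (h.eigenvalues i) else 0

/-- The diagonal part of a matrix. -/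
def diagPart {n : Type*} [Fintype n] [DecidableEq n] (ρ : Matrix n n ℂ) : Matrix n n ℂ :=
  Matrix.diagonal fun i => ρ i i

/-- Relative entropy of coherence in the computational basis. -/
noncomputable def relEntCoh {n : Type*} [Fintype n] [DecidableEq n] (ρ : Matrix n n ℂ) : ℝ :=
  vnEntropy (diagPart ρ) - vnEntropy ρ

/-- A density matrix: positive semidefinite with trace one. -/
def IsDensity {n : Type*} [Fintype n] [DecidableEq n] (ρ : Matrix n n ℂ) : Prop :=
  ρ.PosSemidef ∧ ρ.trace = 1

/-- Two-qubit index type: the first component is qubit A, the second is qubit B. -/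
abbrev Q2 := Fin 2 × Fin 2

/-- Z-parity projector Π⁺ = |00⟩⟨00| + |11⟩⟨11|. -/
def PiPlus : Matrix Q2 Q2 ℂ := Matrix.diagonal fun i => if i.1 = i.2 then 1 else 0

/-- Z-parity projector Π⁻ = |01⟩⟨01| + |10⟩⟨10|. -/
def PiMinus : Matrix Q2 Q2 ℂ := Matrix.diagonal fun i => if i.1 = i.2 then 0 else 1

/-- Partial dephasing channel Φ(ρ) = Π⁺ρΠ⁺ + Π⁻ρΠ⁻. -/
def dephase (ρ : Matrix Q2 Q2 ℂ) : Matrix Q2 Q2 ℂ :=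
  PiPlus * ρ * PiPlus + PiMinus * ρ * PiMinus

/-- Binary entropy (base 2). -/
noncomputable def binEnt (e : ℝ) : ℝ := -(e * Real.logb 2 e) - (1 - e) * Real.logb 2 (1 - e)

/-- X-basis projector Π_x⁻ = |+−⟩⟨+−| + |−+⟩⟨−+|, written entrywise. -/
def PiXMinus : Matrix Q2 Q2 ℂ :=
  Matrix.of fun i j => (1/4 : ℂ) *
    ((if i.1 = j.1 then 1 else -1) + (if i.2 = j.2 then 1 else -1))

/-- phase i^a for a : Fin 2 -/
def yph : Fin 2 → ℂ := fun a => if a = 0 then 1 else Complex.I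

/-- Y-basis projector Π_y⁻ = |+i,+i⟩⟨+i,+i| + |−i,−i⟩⟨−i,−i|, written entrywise. -/
def PiYMinus : Matrix Q2 Q2 ℂ :=
  Matrix.of fun i j => (1/4 : ℂ) *
    (yph i.1 * yph i.2 * star (yph j.1) * star (yph j.2)
      + star (yph i.1) * star (yph i.2) * yph j.1 * yph j.2)

/-- The matrix ρ(a,b): diagonal (m00,m11,m22,m33), entry a between |00⟩,|11⟩,
entry b between |01⟩,|10⟩, zeros elsewhere. -/
def rhoGen (m00 m11 m22 m33 a b : ℝ) : Matrix Q2 Q2 ℂ :=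
  Matrix.of fun i j =>
    if i = j then
      (if i = (0, 0) then (m00 : ℂ) else if i = (0, 1) then (m11 : ℂ)
        else if i = (1, 0) then (m22 : ℂ) else (m33 : ℂ))
    else if (i = ((0 : Fin 2), (0 : Fin 2)) ∧ j = (1, 1)) ∨ (i = (1, 1) ∧ j = (0, 0)) then (a : ℂ)
    else if (i = ((0 : Fin 2), (1 : Fin 2)) ∧ j = (1, 0)) ∨ (i = (1, 0) ∧ j = (0, 1)) then (b : ℂ)
    else 0

/-- The Bell-diagonal state with weights p0,p1,p2,p3 on |Φ⁺⟩,|Φ⁻⟩,|Ψ⁺⟩,|Ψ⁻⟩. -/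
def bellDiag (p0 p1 p2 p3 : ℝ) : Matrix Q2 Q2 ℂ :=
  rhoGen ((p0 + p1)/2) ((p2 + p3)/2) ((p2 + p3)/2) ((p0 + p1)/2) ((p0 - p1)/2) ((p2 - p3)/2)

/-- Partial trace over the first qubit (A). -/
def trA (M : Matrix Q2 Q2 ℂ) : Matrix (Fin 2) (Fin 2) ℂ :=
  Matrix.of fun j j' => ∑ i : Fin 2, M (i, j) (i, j')

/-- Partial trace over the second qubit (B). -/
def trB (M : Matrix Q2 Q2 ℂ) : Matrix (Fin 2) (Fin 2) ℂ :=
  Matrix.of fun i i' => ∑ j : Fin 2, M (i, j) (i', j)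

/-- Coherence-based key-rate functional K(ρ) = C(Φ(ρ)) − H(Tr(Π⁻ρ)). -/
noncomputable def keyRate (ρ : Matrix Q2 Q2 ℂ) : ℝ :=
  relEntCoh (dephase ρ) - binEnt ((PiMinus * ρ).trace.re)

/-- Outer product |ψ⟩⟨ψ|. -/
def outer (ψ : Q2 → ℂ) : Matrix Q2 Q2 ℂ := Matrix.of fun i j => ψ i * star (ψ j)

/-- Basis-optimized key rate: supremum of K over all local basis changes. -/
noncomputable def Km (ρ : Matrix Q2 Q2 ℂ) : ℝ :=
  sSup {x : ℝ | ∃ U V : Matrix (Fin 2) (Fin 2) ℂ, U ∈ Matrix.unitaryGroup (Fin 2) ℂ ∧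
    V ∈ Matrix.unitaryGroup (Fin 2) ℂ ∧ x = keyRate ((U ⊗ₖ V) * ρ * (U ⊗ₖ V)ᴴ)}


/-- Regrouping of the two-qubit basis by parity: `00, 11` on the left, `01, 10` on the right. -/
def parityEquiv : Fin 2 ⊕ Fin 2 ≃ Q2 where
  toFun := Sum.elim (fun i => (i, i)) (fun i => (i, 1 - i))
  invFun := fun x => if x.1 = x.2 then Sum.inl x.1 else Sum.inr x.1
  left_inv := by decide
  right_inv := by decide

lemma rhoGen_isHermitian (m00 m11 m22 m33 a b : ℝ) :
    (rhoGen m00 m11 m22 m33 a b).IsHermitian := by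
  ext ⟨i, j⟩ ⟨k, l⟩
  fin_cases i <;> fin_cases j <;> fin_cases k <;> fin_cases l <;> simp [rhoGen]

lemma diagPart_rhoGen (m00 m11 m22 m33 a b : ℝ) :
    diagPart (rhoGen m00 m11 m22 m33 a b) = rhoGen m00 m11 m22 m33 0 0 := by
  ext ⟨i, j⟩ ⟨k, l⟩
  fin_cases i <;> fin_cases j <;> fin_cases k <;> fin_cases l <;>
    simp [rhoGen, diagPart, Matrix.diagonal]

lemma rhoGen_eq_reindex (m00 m11 m22 m33 a b : ℝ) :
    rhoGen m00 m11 m22 m33 a b = Matrix.reindex parityEquiv parityEquiv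
      (Matrix.fromBlocks !![(m00 : ℂ), a; a, m33] 0 0 !![(m11 : ℂ), b; b, m22]) := by
  ext ⟨i, j⟩ ⟨k, l⟩
  fin_cases i <;> fin_cases j <;> fin_cases k <;> fin_cases l <;>
    simp [rhoGen, parityEquiv]

lemma charpoly_two (m n a l1 l2 : ℝ) (hs : l1 + l2 = m + n) (hp : l1 * l2 = m * n - a ^ 2) :
    (!![(m : ℂ), a; a, n]).charpoly =
      (Polynomial.X - Polynomial.C (l1 : ℂ)) * (Polynomial.X - Polynomial.C (l2 : ℂ)) := by
  have hs' : (l1 : ℂ) + l2 = m + n := by exact_mod_cast hs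
  have hp' : (l1 : ℂ) * l2 = m * n - a ^ 2 := by exact_mod_cast hp
  have htr : (!![(m : ℂ), a; a, n]).trace = (l1 : ℂ) + l2 := by
    rw [hs', Matrix.trace_fin_two]; simp
  have hdet : (!![(m : ℂ), a; a, n]).det = (l1 : ℂ) * l2 := by
    rw [hp', Matrix.det_fin_two]; simp; ring
  rw [Matrix.charpoly_fin_two, htr, hdet, map_add, map_mul]
  ring

/-- The entropy of `ρ(a,b)` from the eigenvalues of its blocks, which are given by their
sums and products. -/
lemma vnEntropy_rhoGen (m00 m11 m22 m33 a b l1 l2 l3 l4 : ℝ)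
    (hs : l1 + l2 = m00 + m33) (hp : l1 * l2 = m00 * m33 - a ^ 2)
    (hs' : l3 + l4 = m11 + m22) (hp' : l3 * l4 = m11 * m22 - b ^ 2) :
    vnEntropy (rhoGen m00 m11 m22 m33 a b) =
      -(l1 * Real.logb 2 l1 + l2 * Real.logb 2 l2 +
        (l3 * Real.logb 2 l3 + l4 * Real.logb 2 l4)) := by
  have hH := rhoGen_isHermitian m00 m11 m22 m33 a b
  have hchar : (rhoGen m00 m11 m22 m33 a b).charpoly =
      (({(l1 : ℂ), (l2 : ℂ), (l3 : ℂ), (l4 : ℂ)} : Multiset ℂ).map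
        fun z => Polynomial.X - Polynomial.C z).prod := by
    rw [rhoGen_eq_reindex, Matrix.charpoly_reindex, Matrix.charpoly_fromBlocks_zero₁₂,
      charpoly_two _ _ _ l1 l2 hs hp, charpoly_two _ _ _ l3 l4 hs' hp']
    simp [mul_assoc]
  have hroots := hH.roots_charpoly_eq_eigenvalues
  rw [hchar, Polynomial.roots_multiset_prod_X_sub_C] at hroots
  have hsum := congrArg
    (fun s : Multiset ℂ => (s.map fun z => z.re * Real.logb 2 z.re).sum) hroots
  simp only [Multiset.map_map] at hsum
  rw [vnEntropy, dif_pos hH]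
  congr 1
  simp only [Function.comp_def, RCLike.ofReal_eq_complex_ofReal, Complex.ofReal_re] at hsum
  rw [Finset.sum, ← hsum]
  simp
  ring

/-- Chain rule for `x log x`; it needs no positivity because `0 * logb 2 0 = 0`. -/
lemma mul_logb_mul (p t : ℝ) :
    p * t * Real.logb 2 (p * t) = p * (t * Real.logb 2 t) + t * (p * Real.logb 2 p) := by
  rcases eq_or_ne p 0 with rfl | hp
  · simp
  rcases eq_or_ne t 0 with rfl | ht
  · simp
  rw [Real.logb_mul hp ht]
  ring

/-- Here `{t, 1 - t}` and `{s, 1 - s}` are the spectra of the two blocks normalized to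
unit trace. -/
lemma vnEntropy_rhoGen_scaled (α eb x y t s : ℝ)
    (ht : t * (1 - t) = α * (1 - α) - x ^ 2) (hs : s * (1 - s) = α * (1 - α) - y ^ 2) :
    vnEntropy (rhoGen (α * (1 - eb)) (α * eb) ((1 - α) * eb) ((1 - α) * (1 - eb))
      ((1 - eb) * x) (eb * y)) = binEnt eb + (1 - eb) * binEnt t + eb * binEnt s := by
  rw [vnEntropy_rhoGen _ _ _ _ _ _ ((1 - eb) * t) ((1 - eb) * (1 - t)) (eb * s) (eb * (1 - s))
    (by ring) (by linear_combination (1 - eb) ^ 2 * ht) (by ring)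
    (by linear_combination eb ^ 2 * hs)]
  simp only [mul_logb_mul, binEnt]
  ring

lemma binEnt_eq (e : ℝ) : binEnt e = Real.binEntropy e / Real.log 2 := by
  rw [binEnt, Real.binEntropy_eq_negMulLog_add_negMulLog_one_sub, Real.negMulLog, Real.negMulLog,
    Real.logb, Real.logb]
  ring

lemma relEntCoh_rhoGen_scaled (α eb x y : ℝ) :
    relEntCoh (rhoGen (α * (1 - eb)) (α * eb) ((1 - α) * eb) ((1 - α) * (1 - eb))
      ((1 - eb) * x) (eb * y)) = binEnt α -
        ((1 - eb) * binEnt (1/2 + Real.sqrt ((α - 1/2)^2 + x^2)) +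
          eb * binEnt (1/2 + Real.sqrt ((α - 1/2)^2 + y^2))) := by
  have key : ∀ z : ℝ, (1/2 + Real.sqrt ((α - 1/2)^2 + z^2)) *
      (1 - (1/2 + Real.sqrt ((α - 1/2)^2 + z^2))) = α * (1 - α) - z ^ 2 := by
    intro z
    have := Real.sq_sqrt (show 0 ≤ (α - 1/2)^2 + z^2 by positivity)
    linear_combination -this
  have hd := vnEntropy_rhoGen_scaled α eb 0 0 α α (by ring) (by ring)
  rw [mul_zero, mul_zero] at hd
  rw [relEntCoh, diagPart_rhoGen, hd, vnEntropy_rhoGen_scaled α eb x y _ _ (key x) (key y)]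
  ring

/-- Convexity of `x ↦ √(k² + x²)`, the Euclidean norm of `(k, x)`. -/
lemma sqrt_convex (k x y p q : ℝ) (hp : 0 ≤ p) (hq : 0 ≤ q) (hpq : p + q = 1) :
    Real.sqrt (k^2 + (p * x + q * y)^2) ≤
      p * Real.sqrt (k^2 + x^2) + q * Real.sqrt (k^2 + y^2) := by
  have hx := Real.sq_sqrt (show 0 ≤ k^2 + x^2 by positivity)
  have hy := Real.sq_sqrt (show 0 ≤ k^2 + y^2 by positivity)
  -- Cauchy–Schwarz for the vectors `(k, x)` and `(k, y)`.
  have hcs : k^2 + x * y ≤ Real.sqrt (k^2 + x^2) * Real.sqrt (k^2 + y^2) := by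
    rw [← Real.sqrt_mul (by positivity)]
    apply Real.le_sqrt_of_sq_le
    nlinarith [sq_nonneg (k * (x - y))]
  apply Real.sqrt_le_iff.mpr
  refine ⟨by positivity, ?_⟩
  have hm := mul_le_mul_of_nonneg_left hcs (mul_nonneg hp hq)
  obtain rfl : q = 1 - p := by linarith
  linear_combination 2 * hm - p ^ 2 * hx - (1 - p) ^ 2 * hy

/-- When the normalized block with off-diagonal entry `x` is positive semidefinite, its larger
eigenvalue `1/2 + √((α - 1/2)² + x²)` is at most `1`. -/
lemma radius_le (α x : ℝ) (hx : x ^ 2 ≤ α * (1 - α)) :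
    Real.sqrt ((α - 1/2)^2 + x^2) ≤ 1/2 := by
  apply Real.sqrt_le_iff.mpr
  constructor
  · norm_num
  · nlinarith

/-- Concavity of `x ↦ H(1/2 + √((α - 1/2)² + x²))`, as a decreasing concave function of a
convex one. -/
lemma binEnt_mix_le (α x y p q : ℝ) (hp : 0 ≤ p) (hq : 0 ≤ q) (hpq : p + q = 1)
    (hx : x ^ 2 ≤ α * (1 - α)) (hy : y ^ 2 ≤ α * (1 - α)) :
    p * binEnt (1/2 + Real.sqrt ((α - 1/2)^2 + x^2)) +
      q * binEnt (1/2 + Real.sqrt ((α - 1/2)^2 + y^2)) ≤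
    binEnt (1/2 + Real.sqrt ((α - 1/2)^2 + (p * x + q * y)^2)) := by
  have hconv := sqrt_convex (α - 1/2) x y p q hp hq hpq
  have hrx := radius_le α x hx
  have hry := radius_le α y hy
  have h0c := Real.sqrt_nonneg ((α - 1/2)^2 + (p * x + q * y)^2)
  have h0x := Real.sqrt_nonneg ((α - 1/2)^2 + x^2)
  have h0y := Real.sqrt_nonneg ((α - 1/2)^2 + y^2)
  set u := Real.sqrt ((α - 1/2)^2 + x^2)
  set v := Real.sqrt ((α - 1/2)^2 + y^2)
  set w := Real.sqrt ((α - 1/2)^2 + (p * x + q * y)^2)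
  have huv : p * u + q * v ≤ 1/2 := by
    have h1 := mul_le_mul_of_nonneg_left hrx hp
    have h2 := mul_le_mul_of_nonneg_left hry hq
    linarith
  have hjensen := Real.strictConcave_binEntropy.concaveOn.2
    (show 1/2 + u ∈ Set.Icc (0 : ℝ) 1 from ⟨by linarith, by linarith⟩)
    (show 1/2 + v ∈ Set.Icc (0 : ℝ) 1 from ⟨by linarith, by linarith⟩) hp hq hpq
  simp only [smul_eq_mul] at hjensen
  have hanti := Real.binEntropy_strictAntiOn.antitoneOn
    (show 1/2 + w ∈ Set.Icc (2⁻¹ : ℝ) 1 from ⟨by linarith, by linarith⟩)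
    (show p * (1/2 + u) + q * (1/2 + v) ∈ Set.Icc (2⁻¹ : ℝ) 1 from
      ⟨by linarith, by linarith⟩) (by linarith)
  simp only [binEnt_eq]
  rw [mul_div_assoc', mul_div_assoc', ← add_div]
  exact div_le_div_of_nonneg_right (hjensen.trans hanti) (Real.log_nonneg (by norm_num))

lemma sqrt_block (α e : ℝ) (he : 0 ≤ e) :
    Real.sqrt ((α * e) * ((1 - α) * e)) = e * Real.sqrt (α * (1 - α)) := by
  rw [show (α * e) * ((1 - α) * e) = e ^ 2 * (α * (1 - α)) by ring,
    Real.sqrt_mul (sq_nonneg e), Real.sqrt_sq he]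

/-- An admissible off-diagonal entry of a block of weight `e` is `e` times an admissible entry
of the normalized block; when `e = 0` the entry vanishes and `0` serves. -/
lemma exists_scaled (e a R : ℝ) (he : 0 ≤ e) (hR : 0 ≤ R) (ha : |a| ≤ e * R) :
    ∃ x, a = e * x ∧ |x| ≤ R := by
  rcases he.eq_or_lt with rfl | he
  · refine ⟨0, ?_, by simpa using hR⟩
    simpa using ha
  · refine ⟨a / e, by field_simp, ?_⟩
    rw [abs_div, abs_of_pos he, div_le_iff₀ he]
    linarith

/-- analytic solution of the coherence minimization in the symmetric
case m₀₀/m₃₃ = m₁₁/m₂₂ = α/(1−α). -/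
theorem stmt_10 (α eb ep : ℝ) (hα0 : 0 < α) (hα1 : α < 1)
    (heb0 : 0 ≤ eb) (heb1 : eb ≤ 1) (hep0 : 0 ≤ ep) (hep1 : ep ≤ 1)
    (hcons : |1/2 - ep| ≤ Real.sqrt (α * (1 - α))) :
    IsLeast {x : ℝ | ∃ a b : ℝ, a + b = 1/2 - ep ∧
        |a| ≤ Real.sqrt ((α * (1 - eb)) * ((1 - α) * (1 - eb))) ∧
        |b| ≤ Real.sqrt ((α * eb) * ((1 - α) * eb)) ∧
        x = relEntCoh (rhoGen (α * (1 - eb)) (α * eb) ((1 - α) * eb) ((1 - α) * (1 - eb)) a b)}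
      (binEnt α - binEnt (1/2 + Real.sqrt ((α - 1/2)^2 + (1/2 - ep)^2))) ∧
    relEntCoh (rhoGen (α * (1 - eb)) (α * eb) ((1 - α) * eb) ((1 - α) * (1 - eb))
        ((1 - eb) * (1/2 - ep)) (eb * (1/2 - ep)))
      = binEnt α - binEnt (1/2 + Real.sqrt ((α - 1/2)^2 + (1/2 - ep)^2)) := by
  have hR := Real.sqrt_nonneg (α * (1 - α))
  have hsq : ∀ x : ℝ, |x| ≤ Real.sqrt (α * (1 - α)) → x ^ 2 ≤ α * (1 - α) := fun x hx => by
    have hle := pow_le_pow_left₀ (abs_nonneg x) hx 2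
    rwa [sq_abs, Real.sq_sqrt (mul_nonneg hα0.le (by linarith))] at hle
  have hval : relEntCoh (rhoGen (α * (1 - eb)) (α * eb) ((1 - α) * eb) ((1 - α) * (1 - eb))
        ((1 - eb) * (1/2 - ep)) (eb * (1/2 - ep)))
      = binEnt α - binEnt (1/2 + Real.sqrt ((α - 1/2)^2 + (1/2 - ep)^2)) := by
    rw [relEntCoh_rhoGen_scaled]
    ring
  rw [sqrt_block α (1 - eb) (by linarith), sqrt_block α eb heb0]
  refine ⟨⟨⟨(1 - eb) * (1/2 - ep), eb * (1/2 - ep), by ring, ?_, ?_, hval.symm⟩, ?_⟩, hval⟩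
  · rw [abs_mul, abs_of_nonneg (by linarith : (0 : ℝ) ≤ 1 - eb)]
    exact mul_le_mul_of_nonneg_left hcons (by linarith)
  · rw [abs_mul, abs_of_nonneg heb0]
    exact mul_le_mul_of_nonneg_left hcons heb0
  · rintro _ ⟨a, b, hab, ha, hb, rfl⟩
    obtain ⟨x, rfl, hx⟩ := exists_scaled (1 - eb) a _ (by linarith) hR ha
    obtain ⟨y, rfl, hy⟩ := exists_scaled eb b _ heb0 hR hb
    rw [relEntCoh_rhoGen_scaled, ← hab]
    exact sub_le_sub_left (binEnt_mix_le α x y (1 - eb) eb (by linarith) heb0 (by ring)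
      (hsq x hx) (hsq y hy)) _

end
end

section
/- Let ρ be a two-qubit density matrix with e_b = Tr(Π⁻ρ). Then C(Φ(ρ)) − H(e_b) ≤ S(Tr_A(Φ(ρ))) − S(Φ(ρ)), where Tr_A denotes the partial trace over the first qubit. (I.e., the coherence-based key rate of ρ is upper bounded by the hashing bound of Φ(ρ).) -/
/-!
The term `S(Φ(ρ))` occurs on both sides, so the claim is
`S(diag Φ(ρ)) ≤ H(e_b) + S(Tr_A Φ(ρ))`. Dephasing keeps the diagonal `p` of `ρ` and kills every entry
between the two parity sectors; in particular `Tr_A Φ(ρ)` is diagonal, its entries being the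
distribution of the second bit under `p`, while `e_b` is the probability under `p` that the parity
of the two bits is odd. By `vnEntropy_diagonal` all three entropies are Shannon entropies. The map
`(i, j) ↦ (i + j, j)` is a bijection, so the inequality is the subadditivity of Shannon
entropy for the pair (parity, second bit), proved in `entropy_le_add` from `log x ≤ x - 1`.
-/

open Matrix Complex Kronecker
open scoped ComplexOrder

noncomputable section

/-- The entropy of a real diagonal matrix is the Shannon entropy of its diagonal: both the
eigenvalues and the diagonal entries are the roots of the characteristic polynomial. -/
lemma vnEntropy_diagonal {n : Type*} [Fintype n] [DecidableEq n] (d : n → ℝ) :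
    vnEntropy (Matrix.diagonal fun i => (d i : ℂ)) = -∑ i, d i * Real.logb 2 (d i) := by
  have h : (Matrix.diagonal fun i => (d i : ℂ)).IsHermitian := by
    apply Matrix.isHermitian_diagonal_of_self_adjoint
    ext i
    simp
  have hroots := h.roots_charpoly_eq_eigenvalues
  rw [Matrix.charpoly_diagonal, Polynomial.roots_prod _ _ (by
    simp [Finset.prod_ne_zero_iff, Polynomial.X_sub_C_ne_zero])] at hroots
  simp only [Polynomial.roots_X_sub_C, Multiset.bind_singleton] at hroots
  have hmap := congrArg
    (fun s : Multiset ℂ => (s.map fun z => z.re * Real.logb 2 z.re).sum) hroots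
  simp only [Multiset.map_map, Function.comp_def, Complex.ofReal_re] at hmap
  rw [vnEntropy, dif_pos h]
  exact congrArg Neg.neg hmap.symm

lemma dephase_apply (ρ : Matrix Q2 Q2 ℂ) (i j : Q2) :
    dephase ρ i j = if (i.1 = i.2 ↔ j.1 = j.2) then ρ i j else 0 := by
  by_cases hi : i.1 = i.2 <;> by_cases hj : j.1 = j.2 <;>
    simp [dephase, PiPlus, PiMinus, Matrix.diagonal_mul, Matrix.mul_diagonal, hi, hj]

/-- One term of the relative entropy of a joint distribution with respect to the product of its
marginals: `p` is a joint probability, and `q`, `r` are the marginal ones. -/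
lemma mul_log_marginals_le {p q r : ℝ} (hp : 0 ≤ p) (hq : p ≤ q) (hr : p ≤ r) :
    p * (Real.log q + Real.log r - Real.log p) ≤ q * r - p := by
  rcases hp.eq_or_lt with rfl | hp
  · simpa using mul_nonneg hq hr
  have hq' := hp.trans_le hq
  have hr' := hp.trans_le hr
  rw [← Real.log_mul hq'.ne' hr'.ne', ← Real.log_div (by positivity) hp.ne']
  calc p * Real.log (q * r / p) ≤ p * (q * r / p - 1) := by
        gcongr
        exact Real.log_le_sub_one_of_pos (by positivity)
    _ = q * r - p := by field_simp

/-- Subadditivity of Shannon entropy for the parity and the second bit of a pair of bits with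
joint probabilities `a, b, c, d` of `00, 01, 10, 11`. -/
lemma entropy_le_add {a b c d : ℝ} (ha : 0 ≤ a) (hb : 0 ≤ b) (hc : 0 ≤ c) (hd : 0 ≤ d)
    (h : a + b + (c + d) = 1) :
    -(a * Real.logb 2 a + b * Real.logb 2 b + (c * Real.logb 2 c + d * Real.logb 2 d)) ≤
      binEnt (b + c) +
        -((a + c) * Real.logb 2 (a + c) + (b + d) * Real.logb 2 (b + d)) := by
  have h1 := mul_log_marginals_le ha (q := a + c) (r := a + d) (by linarith) (by linarith)
  have h2 := mul_log_marginals_le hb (q := b + d) (r := b + c) (by linarith) (by linarith)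
  have h3 := mul_log_marginals_le hc (q := a + c) (r := b + c) (by linarith) (by linarith)
  have h4 := mul_log_marginals_le hd (q := b + d) (r := a + d) (by linarith) (by linarith)
  -- The products of the marginals sum to one, just as the joint probabilities do.
  have hprod : (a + c) * (a + d) + (b + d) * (b + c) + (a + c) * (b + c) + (b + d) * (a + d)
      = 1 := by
    have : (a + b + (c + d)) * (a + b + (c + d)) = 1 := by rw [h, one_mul]
    linarith
  have hlog : 0 < Real.log 2 := Real.log_pos one_lt_two
  rw [binEnt, show 1 - (b + c) = a + d by linarith]
  simp only [Real.logb]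
  rw [← sub_nonneg]
  have hnum : 0 ≤ (a * Real.log a + b * Real.log b + (c * Real.log c + d * Real.log d)
      - (b + c) * Real.log (b + c) - (a + d) * Real.log (a + d)
      - (a + c) * Real.log (a + c) - (b + d) * Real.log (b + d)) := by
    linarith
  refine (div_nonneg hnum hlog.le).trans_eq ?_
  ring

/-- the coherence-based key rate is upper bounded by the hashing
bound of Φ(ρ). -/
theorem stmt_13 (ρ : Matrix Q2 Q2 ℂ) (hρ : IsDensity ρ) :
    relEntCoh (dephase ρ) - binEnt ((PiMinus * ρ).trace.re) ≤
      vnEntropy (trA (dephase ρ)) - vnEntropy (dephase ρ) := by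
  -- `p` is the distribution of a computational-basis measurement.
  set p : Q2 → ℝ := fun i => (ρ i i).re with hp
  have hpc : ∀ i, ρ i i = (p i : ℂ) := fun i => (hρ.1.isHermitian.coe_re_apply_self i).symm
  have hp0 : ∀ i, 0 ≤ p i := fun i => (Complex.nonneg_iff.1 hρ.1.diag_nonneg).1
  have hsum : p (0, 0) + p (0, 1) + (p (1, 0) + p (1, 1)) = 1 := by
    have h := congrArg Complex.re hρ.2
    simpa [Matrix.trace, Fintype.sum_prod_type, hp] using h
  have hdiag : diagPart (dephase ρ) = Matrix.diagonal fun i => (p i : ℂ) := by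
    unfold diagPart
    congr 1
    funext i
    rw [dephase_apply, if_pos Iff.rfl, hpc]
  have hB : trA (dephase ρ) =
      Matrix.diagonal fun j => ((p (0, j) + p (1, j) : ℝ) : ℂ) := by
    ext j j'
    fin_cases j <;> fin_cases j' <;> simp [trA, dephase_apply, hpc]
  have he : (PiMinus * ρ).trace.re = p (0, 1) + p (1, 0) := by
    simp [PiMinus, Matrix.trace, Fintype.sum_prod_type, Matrix.diagonal_mul, hp]
  have key := entropy_le_add (hp0 (0, 0)) (hp0 (0, 1)) (hp0 (1, 0)) (hp0 (1, 1)) hsum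
  unfold relEntCoh
  rw [hdiag, hB, he, vnEntropy_diagonal, vnEntropy_diagonal]
  simp only [Fintype.sum_prod_type, Fin.sum_univ_two]
  linarith

end
end
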